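/- LL is not complete with respect to LLTN: taking X = ⊥⊗⊥, the sequent ⊥ ⊕ (X⊥ ⅋ ?(X⊥)), !X has a bounded proof in LLTN, but it is not provable in LL. -/

import Mathlib

/-- Formulae of propositional-variable-free linear logic. -/
inductive Fm : Type
  | zero | one | top | bot
  | tens (A B : Fm) | parr (A B : Fm)
  | plus (A B : Fm) | awith (A B : Fm)
  | quest (A : Fm) | bang (A : Fm)

/-- Linear negation (De Morgan duality). -/
def Fm.dual : Fm → Fm
  | .zero => .top
  | .top => .zero
  | .one => .bot
  | .bot => .one
  | .tens A B => .parr A.dual B.dual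
  | .parr A B => .tens A.dual B.dual
  | .plus A B => .awith A.dual B.dual
  | .awith A B => .plus A.dual B.dual
  | .quest A => .bang A.dual
  | .bang A => .quest A.dual

/-- A formula of the form ?C. -/
def IsQuest (A : Fm) : Prop := ∃ C, A = Fm.quest C

/-- ⅋⁰A = ⊥, ⅋ⁿ⁺¹A = (⅋ⁿA) ⅋ A. -/
def parrPow : ℕ → Fm → Fm
  | 0, _ => .bot
  | n + 1, A => .parr (parrPow n A) A

/-- ⊗⁰A = 1, ⊗ⁿ⁺¹A = (⊗ⁿA) ⊗ A. -/
def tensPow : ℕ → Fm → Fm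
  | 0, _ => .one
  | n + 1, A => .tens (tensPow n A) A

/-- One-sided sequent calculus LL.  `Γ, A` is encoded as `Γ ++ [A]`. -/
inductive LL : List Fm → Prop
  | one : LL [Fm.one]
  | bot {Γ} : LL Γ → LL (Γ ++ [Fm.bot])
  | top (Γ) : LL (Γ ++ [Fm.top])
  | tens {Γ Δ A B} : LL (Γ ++ [A]) → LL (Δ ++ [B]) → LL (Γ ++ Δ ++ [Fm.tens A B])
  | parr {Γ A B} : LL (Γ ++ [A, B]) → LL (Γ ++ [Fm.parr A B])
  | plusl {Γ A B} : LL (Γ ++ [A]) → LL (Γ ++ [Fm.plus A B])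
  | plusr {Γ A B} : LL (Γ ++ [B]) → LL (Γ ++ [Fm.plus A B])
  | awith {Γ A B} : LL (Γ ++ [A]) → LL (Γ ++ [B]) → LL (Γ ++ [Fm.awith A B])
  | der {Γ A} : LL (Γ ++ [A]) → LL (Γ ++ [Fm.quest A])
  | wk {Γ A} : LL Γ → LL (Γ ++ [Fm.quest A])
  | ctr {Γ A} : LL (Γ ++ [Fm.quest A, Fm.quest A]) → LL (Γ ++ [Fm.quest A])
  | prom {Γ A} : (∀ C ∈ Γ, IsQuest C) → LL (Γ ++ [A]) → LL (Γ ++ [Fm.bang A])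
  | ex {Γ Δ A B} : LL (Γ ++ [B, A] ++ Δ) → LL (Γ ++ [A, B] ++ Δ)
  | cut {Γ Δ A} : LL (Γ ++ [A]) → LL (Fm.dual A :: Δ) → LL (Γ ++ Δ)

/-- LLT: LL with the tensor rule replaced by NewTens. -/
inductive LLT : List Fm → Prop
  | one : LLT [Fm.one]
  | bot {Γ} : LLT Γ → LLT (Γ ++ [Fm.bot])
  | top (Γ) : LLT (Γ ++ [Fm.top])
  | newtens {Γ Δ Θ A B} : (∀ C ∈ Θ, IsQuest C) →
      LLT (Γ ++ Θ ++ [A]) → LLT (Δ ++ Θ ++ [B]) →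
      LLT (Γ ++ Δ ++ Θ ++ [Fm.tens A B])
  | parr {Γ A B} : LLT (Γ ++ [A, B]) → LLT (Γ ++ [Fm.parr A B])
  | plusl {Γ A B} : LLT (Γ ++ [A]) → LLT (Γ ++ [Fm.plus A B])
  | plusr {Γ A B} : LLT (Γ ++ [B]) → LLT (Γ ++ [Fm.plus A B])
  | awith {Γ A B} : LLT (Γ ++ [A]) → LLT (Γ ++ [B]) → LLT (Γ ++ [Fm.awith A B])
  | der {Γ A} : LLT (Γ ++ [A]) → LLT (Γ ++ [Fm.quest A])
  | wk {Γ A} : LLT Γ → LLT (Γ ++ [Fm.quest A])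
  | ctr {Γ A} : LLT (Γ ++ [Fm.quest A, Fm.quest A]) → LLT (Γ ++ [Fm.quest A])
  | prom {Γ A} : (∀ C ∈ Γ, IsQuest C) → LLT (Γ ++ [A]) → LLT (Γ ++ [Fm.bang A])
  | ex {Γ Δ A B} : LLT (Γ ++ [B, A] ++ Δ) → LLT (Γ ++ [A, B] ++ Δ)
  | cut {Γ Δ A} : LLT (Γ ++ [A]) → LLT (Fm.dual A :: Δ) → LLT (Γ ++ Δ)

/-- cc-free provability in LLT: LLT without cut and without contraction. -/
inductive LLTcc : List Fm → Prop
  | one : LLTcc [Fm.one]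
  | bot {Γ} : LLTcc Γ → LLTcc (Γ ++ [Fm.bot])
  | top (Γ) : LLTcc (Γ ++ [Fm.top])
  | newtens {Γ Δ Θ A B} : (∀ C ∈ Θ, IsQuest C) →
      LLTcc (Γ ++ Θ ++ [A]) → LLTcc (Δ ++ Θ ++ [B]) →
      LLTcc (Γ ++ Δ ++ Θ ++ [Fm.tens A B])
  | parr {Γ A B} : LLTcc (Γ ++ [A, B]) → LLTcc (Γ ++ [Fm.parr A B])
  | plusl {Γ A B} : LLTcc (Γ ++ [A]) → LLTcc (Γ ++ [Fm.plus A B])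
  | plusr {Γ A B} : LLTcc (Γ ++ [B]) → LLTcc (Γ ++ [Fm.plus A B])
  | awith {Γ A B} : LLTcc (Γ ++ [A]) → LLTcc (Γ ++ [B]) → LLTcc (Γ ++ [Fm.awith A B])
  | der {Γ A} : LLTcc (Γ ++ [A]) → LLTcc (Γ ++ [Fm.quest A])
  | wk {Γ A} : LLTcc Γ → LLTcc (Γ ++ [Fm.quest A])
  | prom {Γ A} : (∀ C ∈ Γ, IsQuest C) → LLTcc (Γ ++ [A]) → LLTcc (Γ ++ [Fm.bang A])
  | ex {Γ Δ A B} : LLTcc (Γ ++ [B, A] ++ Δ) → LLTcc (Γ ++ [A, B] ++ Δ)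

/-- LLTN: LLT with contraction, weakening, dereliction and promotion replaced by
n-ary dereliction and the infinitary (!) rule. -/
inductive LLTN : List Fm → Prop
  | one : LLTN [Fm.one]
  | bot {Γ} : LLTN Γ → LLTN (Γ ++ [Fm.bot])
  | top (Γ) : LLTN (Γ ++ [Fm.top])
  | newtens {Γ Δ Θ A B} : (∀ C ∈ Θ, IsQuest C) →
      LLTN (Γ ++ Θ ++ [A]) → LLTN (Δ ++ Θ ++ [B]) →
      LLTN (Γ ++ Δ ++ Θ ++ [Fm.tens A B])
  | parr {Γ A B} : LLTN (Γ ++ [A, B]) → LLTN (Γ ++ [Fm.parr A B])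
  | plusl {Γ A B} : LLTN (Γ ++ [A]) → LLTN (Γ ++ [Fm.plus A B])
  | plusr {Γ A B} : LLTN (Γ ++ [B]) → LLTN (Γ ++ [Fm.plus A B])
  | awith {Γ A B} : LLTN (Γ ++ [A]) → LLTN (Γ ++ [B]) → LLTN (Γ ++ [Fm.awith A B])
  | nder {Γ A} (n : ℕ) : LLTN (Γ ++ [parrPow n A]) → LLTN (Γ ++ [Fm.quest A])
  | bang {Γ A} : (∀ n : ℕ, LLTN (Γ ++ [tensPow n A])) → LLTN (Γ ++ [Fm.bang A])
  | ex {Γ Δ A B} : LLTN (Γ ++ [B, A] ++ Δ) → LLTN (Γ ++ [A, B] ++ Δ)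
  | cut {Γ Δ A} : LLTN (Γ ++ [A]) → LLTN (Fm.dual A :: Δ) → LLTN (Γ ++ Δ)

/-- Cut-free provability in LLTN. -/
inductive LLTNcf : List Fm → Prop
  | one : LLTNcf [Fm.one]
  | bot {Γ} : LLTNcf Γ → LLTNcf (Γ ++ [Fm.bot])
  | top (Γ) : LLTNcf (Γ ++ [Fm.top])
  | newtens {Γ Δ Θ A B} : (∀ C ∈ Θ, IsQuest C) →
      LLTNcf (Γ ++ Θ ++ [A]) → LLTNcf (Δ ++ Θ ++ [B]) →
      LLTNcf (Γ ++ Δ ++ Θ ++ [Fm.tens A B])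
  | parr {Γ A B} : LLTNcf (Γ ++ [A, B]) → LLTNcf (Γ ++ [Fm.parr A B])
  | plusl {Γ A B} : LLTNcf (Γ ++ [A]) → LLTNcf (Γ ++ [Fm.plus A B])
  | plusr {Γ A B} : LLTNcf (Γ ++ [B]) → LLTNcf (Γ ++ [Fm.plus A B])
  | awith {Γ A B} : LLTNcf (Γ ++ [A]) → LLTNcf (Γ ++ [B]) → LLTNcf (Γ ++ [Fm.awith A B])
  | nder {Γ A} (n : ℕ) : LLTNcf (Γ ++ [parrPow n A]) → LLTNcf (Γ ++ [Fm.quest A])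
  | bang {Γ A} : (∀ n : ℕ, LLTNcf (Γ ++ [tensPow n A])) → LLTNcf (Γ ++ [Fm.bang A])
  | ex {Γ Δ A B} : LLTNcf (Γ ++ [B, A] ++ Δ) → LLTNcf (Γ ++ [A, B] ++ Δ)

/-- Γ has a bounded proof in LLTN: either a cut-free proof, or a single final cut
whose premises (a proof of a single formula A and a proof of A⊥, Γ) are cut-free. -/
def BoundedLLTN (Γ : List Fm) : Prop :=
  LLTNcf Γ ∨ ∃ A : Fm, LLTNcf [A] ∧ LLTNcf (Fm.dual A :: Γ)

/-- The duplicator formula dup(A) = !( ?(A⊥) ⅋ (!A ⊗ !A) ). -/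
def dup (A : Fm) : Fm :=
  Fm.bang (Fm.parr (Fm.quest A.dual) (Fm.tens (Fm.bang A) (Fm.bang A)))

open scoped Pointwise

/-! ### The cut-free LLTN proof -/

theorem LLTNcf.swap2 {A B : Fm} (h : LLTNcf [B, A]) : LLTNcf [A, B] :=
  LLTNcf.ex (Γ := []) (Δ := []) h

theorem LLTNcf.swapL {A B C : Fm} (h : LLTNcf [B, A, C]) : LLTNcf [A, B, C] :=
  LLTNcf.ex (Γ := []) (Δ := [C]) h

theorem LLTNcf.swapR {A B C : Fm} (h : LLTNcf [C, B, A]) : LLTNcf [C, A, B] :=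
  LLTNcf.ex (Γ := [C]) (Δ := []) h

theorem LLTNcf.tens2 {A B C D : Fm} (h : LLTNcf [C, A]) (h' : LLTNcf [D, B]) :
    LLTNcf [C, D, Fm.tens A B] :=
  LLTNcf.newtens (Γ := [C]) (Δ := [D]) (Θ := []) (by simp) h h'

theorem LLTNcf.oneBot : LLTNcf [Fm.one, Fm.bot] := LLTNcf.bot LLTNcf.one

theorem LLTNcf.idX :
    LLTNcf [Fm.parr Fm.one Fm.one, Fm.tens Fm.bot Fm.bot] :=
  LLTNcf.swap2 (LLTNcf.parr (Γ := [Fm.tens Fm.bot Fm.bot])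
    (LLTNcf.swapL (LLTNcf.swapR (LLTNcf.tens2 LLTNcf.oneBot LLTNcf.oneBot))))

theorem LLTNcf.idPow (n : ℕ) :
    LLTNcf [parrPow n (Fm.parr Fm.one Fm.one), tensPow n (Fm.tens Fm.bot Fm.bot)] := by
  induction n with
  | zero => exact LLTNcf.swap2 LLTNcf.oneBot
  | succ n ih =>
    exact LLTNcf.swap2 (LLTNcf.parr (Γ := [tensPow (n + 1) (Fm.tens Fm.bot Fm.bot)])
      (LLTNcf.swapL (LLTNcf.swapR (LLTNcf.tens2 ih LLTNcf.idX))))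

theorem lltn_side : LLTNcf
      [Fm.plus Fm.bot (Fm.parr (Fm.tens Fm.bot Fm.bot).dual
          (Fm.quest (Fm.tens Fm.bot Fm.bot).dual)),
        Fm.bang (Fm.tens Fm.bot Fm.bot)] := by
  refine LLTNcf.bang (Γ := [_]) fun n => LLTNcf.swap2 ?_
  cases n with
  | zero => exact LLTNcf.plusl (Γ := [Fm.one]) LLTNcf.oneBot
  | succ n =>
    refine LLTNcf.plusr (Γ := [_]) (LLTNcf.parr (Γ := [_]) ?_)
    refine LLTNcf.nder (Γ := [_, _]) n ?_
    exact LLTNcf.swapL (LLTNcf.swapR (LLTNcf.swapL (LLTNcf.tens2 (LLTNcf.idPow n) LLTNcf.idX)))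

/-! ### Phase semantics -/

/-- Orthogonal of a set with respect to a pole. -/
def orth {M : Type} [CommMonoid M] (P S : Set M) : Set M := {x | ∀ y ∈ S, x * y ∈ P}

section phase
variable {M : Type} [CommMonoid M] {P K S T : Set M}

theorem orth_anti (h : S ⊆ T) : orth P T ⊆ orth P S := fun _ hx y hy => hx y (h hy)

theorem sub_biorth : S ⊆ orth P (orth P S) := fun x hx y hy => by
  rw [mul_comm]; exact hy x hx

theorem triorth : orth P (orth P (orth P S)) = orth P S :=
  Set.Subset.antisymm (orth_anti sub_biorth) sub_biorth

theorem orth_mul_biorth : orth P (orth P (orth P S) * orth P (orth P T)) = orth P (S * T) := by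
  apply Set.Subset.antisymm
  · exact orth_anti (Set.mul_subset_mul sub_biorth sub_biorth)
  · rintro x hx _ ⟨a, ha, b, hb, rfl⟩
    have h1 : ∀ s ∈ S, x * s * b ∈ P := fun s hs => by
      have : x * s ∈ orth P T := fun t ht => by
        rw [mul_assoc]; exact hx _ ⟨s, hs, t, ht, rfl⟩
      rw [mul_comm]; exact hb _ this
    have h2 : x * b ∈ orth P S := fun s hs => by
      rw [mul_right_comm]; exact h1 s hs
    have := ha _ h2
    change x * (a * b) ∈ P
    rwa [mul_left_comm]

/-- Interpretation of formulae as facts. -/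
def den (P K : Set M) : Fm → Set M
  | .zero => orth P Set.univ
  | .top => Set.univ
  | .one => orth P P
  | .bot => P
  | .tens A B => orth P (orth P (den P K A * den P K B))
  | .parr A B => orth P (orth P (den P K A) * orth P (den P K B))
  | .plus A B => orth P (orth P (den P K A) ∩ orth P (den P K B))
  | .awith A B => den P K A ∩ den P K B
  | .quest A => orth P (orth P (den P K A) ∩ K)
  | .bang A => orth P (orth P (den P K A ∩ K))

theorem orth_one : orth P {1} = P := by
  ext x; simp [orth]

theorem orth_orth_P : orth P (orth P P) = P := by
  conv_lhs => rw [← orth_one (P := P)]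
  conv_rhs => rw [← orth_one (P := P)]
  rw [orth_one]
  have := triorth (P := P) (S := {1})
  rwa [orth_one] at this

theorem den_closed (A : Fm) : orth P (orth P (den P K A)) = den P K A := by
  induction A with
  | top => exact Set.Subset.antisymm (Set.subset_univ _) sub_biorth
  | bot => exact orth_orth_P
  | awith A B ihA ihB =>
    refine Set.Subset.antisymm (fun x hx => ⟨?_, ?_⟩) sub_biorth
    · rw [← ihA]; exact orth_anti (orth_anti Set.inter_subset_left) hx
    · rw [← ihB]; exact orth_anti (orth_anti Set.inter_subset_right) hx
  | _ => exact triorth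

theorem den_dual (A : Fm) : den P K A.dual = orth P (den P K A) := by
  induction A with
  | zero => exact (den_closed (P := P) (K := K) Fm.top).symm
  | top => rfl
  | one => exact orth_orth_P.symm
  | bot => rfl
  | tens A B ihA ihB =>
    simp only [Fm.dual, den, ihA, ihB, den_closed, triorth]
  | parr A B ihA ihB => simp only [Fm.dual, den, ihA, ihB]
  | plus A B ihA ihB =>
    have := den_closed (P := P) (K := K) (Fm.awith A.dual B.dual)
    simp only [den, ihA, ihB] at this
    simp only [Fm.dual, den, ihA, ihB, this]
  | awith A B ihA ihB => simp only [Fm.dual, den, ihA, ihB, den_closed]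
  | quest A ih => simp only [Fm.dual, den, ih]
  | bang A ih => simp only [Fm.dual, den, ih, den_closed, triorth]

/-- Product of the refutation sets of a sequent. -/
def ctx (P K : Set M) (Γ : List Fm) : Set M := (Γ.map fun A => orth P (den P K A)).prod

theorem ctx_append (Γ Δ : List Fm) : ctx P K (Γ ++ Δ) = ctx P K Γ * ctx P K Δ := by
  simp [ctx]

theorem ctx_cons (A : Fm) (Δ : List Fm) : ctx P K (A :: Δ) = orth P (den P K A) * ctx P K Δ := by
  simp [ctx]

theorem valid_snoc (Γ : List Fm) (A : Fm) :
    ctx P K (Γ ++ [A]) ⊆ P ↔ ctx P K Γ ⊆ den P K A := by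
  rw [ctx_append]
  constructor
  · intro h x hx
    rw [← den_closed]
    intro y hy
    exact h ⟨x, hx, y, by simpa [ctx] using hy, rfl⟩
  · rintro h _ ⟨x, hx, y, hy, rfl⟩
    have hy' : y ∈ orth P (den P K A) := by simpa [ctx] using hy
    change x * y ∈ P
    rw [mul_comm]; exact hy' x (h hx)

theorem quest_ctx (h1 : (1 : M) ∈ K) (hmul : ∀ a ∈ K, ∀ b ∈ K, a * b ∈ K) (Γ : List Fm)
    (hΓ : ∀ C ∈ Γ, IsQuest C) :
    ∃ Q : Set M, Q ⊆ K ∧ Q ⊆ ctx P K Γ ∧ ctx P K Γ ⊆ orth P (orth P Q) := by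
  induction Γ with
  | nil => exact ⟨{1}, by simpa using h1, by simp [ctx], by simpa [ctx] using sub_biorth (P := P) (S := {(1 : M)}) rfl⟩
  | cons A Γ ih =>
    obtain ⟨Q, q1, q2, q3⟩ := ih fun C hC => hΓ C (by simp [hC])
    obtain ⟨C, rfl⟩ := hΓ A (by simp)
    refine ⟨(orth P (den P K C) ∩ K) * Q, ?_, ?_, ?_⟩
    · rintro _ ⟨a, ha, b, hb, rfl⟩
      exact hmul _ ha.2 _ (q1 hb)
    · rw [ctx_cons]
      exact Set.mul_subset_mul sub_biorth q2
    · rw [ctx_cons, ← orth_mul_biorth]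
      exact (Set.mul_subset_mul le_rfl q3).trans sub_biorth

theorem soundness (h1 : (1 : M) ∈ K) (hmul : ∀ a ∈ K, ∀ b ∈ K, a * b ∈ K)
    (hidem : ∀ a ∈ K, a * a = a) (hK : K ⊆ orth P P) {Γ : List Fm} (h : LL Γ) :
    ctx P K Γ ⊆ P := by
  induction h with
  | one =>
    have := (valid_snoc (P := P) (K := K) [] Fm.one).2
    refine this ?_
    simp [ctx, den, orth]
  | bot _ ih => exact (valid_snoc _ _).2 ih
  | top Γ => exact (valid_snoc _ _).2 (Set.subset_univ _)
  | tens _ _ ih1 ih2 =>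
    rw [valid_snoc] at *
    rw [ctx_append]
    exact (Set.mul_subset_mul ih1 ih2).trans sub_biorth
  | @parr Γ A B _ ih =>
    rw [valid_snoc]
    intro x hx y hy
    apply ih
    rw [ctx_append]
    exact ⟨x, hx, y, by simpa [ctx] using hy, rfl⟩
  | plusl _ ih =>
    rw [valid_snoc] at *
    intro x hx y hy
    rw [mul_comm]; exact hy.1 x (ih hx)
  | plusr _ ih =>
    rw [valid_snoc] at *
    intro x hx y hy
    rw [mul_comm]; exact hy.2 x (ih hx)
  | awith _ _ ih1 ih2 =>
    rw [valid_snoc] at *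
    exact fun x hx => ⟨ih1 hx, ih2 hx⟩
  | der _ ih =>
    rw [valid_snoc] at *
    intro x hx y hy
    rw [mul_comm]; exact hy.1 x (ih hx)
  | wk _ ih =>
    rw [valid_snoc]
    intro x hx y hy
    rw [mul_comm]; exact hK hy.2 x (ih hx)
  | @ctr Γ A _ ih =>
    rw [valid_snoc]
    intro x hx y hy
    apply ih
    rw [ctx_append]
    refine ⟨x, hx, y, ?_, rfl⟩
    have hy' : y ∈ orth P (den P K (Fm.quest A)) := sub_biorth hy
    rw [ctx_cons, ← hidem y hy.2]
    exact ⟨y, hy', y, by simpa [ctx] using hy', rfl⟩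
  | @prom Γ A hΓ _ ih =>
    rw [valid_snoc] at *
    obtain ⟨Q, q1, q2, q3⟩ := quest_ctx (P := P) h1 hmul Γ hΓ
    exact q3.trans (orth_anti (orth_anti fun x hx => ⟨ih (q2 hx), q1 hx⟩))
  | @ex Γ Δ A B _ ih =>
    simp only [ctx_append, ctx_cons] at *
    rwa [mul_left_comm (orth P (den P K A))]
  | @cut Γ Δ A _ _ ih1 ih2 =>
    rw [valid_snoc] at ih1
    rw [ctx_append]
    rw [ctx_cons, den_dual, den_closed] at ih2
    exact (Set.mul_subset_mul ih1 le_rfl).trans ih2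

end phase

/-! ### The countermodel -/

/-- Balance, and two flags combined by maximum. -/
@[ext] structure CM : Type where
  m : ℤ
  w : ℕ
  f : ℕ

instance : CommMonoid CM where
  mul a b := ⟨a.m + b.m, max a.w b.w, max a.f b.f⟩
  one := ⟨0, 0, 0⟩
  mul_assoc a b c := CM.ext (add_assoc _ _ _) (max_assoc _ _ _) (max_assoc _ _ _)
  mul_comm a b := CM.ext (add_comm _ _) (max_comm _ _) (max_comm _ _)
  one_mul a := CM.ext (zero_add _) (Nat.zero_max _) (Nat.zero_max _)
  mul_one a := CM.ext (add_zero _) (Nat.max_zero _) (Nat.max_zero _)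

theorem CM.mul_def (a b : CM) : a * b = ⟨a.m + b.m, max a.w b.w, max a.f b.f⟩ := rfl
theorem CM.one_def : (1 : CM) = ⟨0, 0, 0⟩ := rfl

/-- The pole of the countermodel. -/
def pole : Set CM := {x | (x.f = 0 ∧ x.w = 0 ∧ x.m = 1) ∨
  (x.f = 1 ∧ ((x.w = 0 ∧ x.m ≤ 1) ∨ x.m ≤ 0)) ∨ (2 ≤ x.f ∧ x.m ≤ 1)}

/-- The exponential submonoid of the countermodel. -/
def expK : Set CM := {1, ⟨0, 0, 2⟩}

theorem pole_iff (a : ℤ) (b c : ℕ) : (⟨a, b, c⟩ : CM) ∈ pole ↔ (c = 0 ∧ b = 0 ∧ a = 1) ∨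
  (c = 1 ∧ ((b = 0 ∧ a ≤ 1) ∨ a ≤ 0)) ∨ (2 ≤ c ∧ a ≤ 1) := Iff.rfl

theorem q_unit : (⟨0, 0, 2⟩ : CM) ∈ orth pole pole := by
  rintro ⟨a, b, c⟩ h
  rw [CM.mul_def, pole_iff]
  rw [pole_iff] at h
  dsimp only
  omega

theorem z_unit : (⟨0, 0, 1⟩ : CM) ∈ orth pole pole := by
  rintro ⟨a, b, c⟩ h
  rw [CM.mul_def, pole_iff]
  rw [pole_iff] at h
  dsimp only
  omega

theorem X_minus : (⟨-1, 0, 0⟩ : CM) ∈ orth pole (pole * pole) := by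
  rintro _ ⟨⟨a, b, c⟩, h, ⟨a', b', c'⟩, h', rfl⟩
  simp only [CM.mul_def, pole_iff] at *
  omega

theorem ll_side : ¬ LL
      [Fm.plus Fm.bot (Fm.parr (Fm.tens Fm.bot Fm.bot).dual
          (Fm.quest (Fm.tens Fm.bot Fm.bot).dual)),
        Fm.bang (Fm.tens Fm.bot Fm.bot)] := by
  intro h
  have hs := soundness (P := pole) (K := expK) (by simp [expK])
    (by rintro a (rfl | rfl) b (rfl | rfl) <;> simp [expK, CM.mul_def, CM.one_def])
    (by rintro a (rfl | rfl) <;> simp [CM.mul_def, CM.one_def])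
    (by
      rintro a (rfl | rfl)
      · intro y hy; simpa using hy
      · exact q_unit) h
  -- elements of X
  have hp : (⟨1, 0, 0⟩ : CM) ∈ pole := by simp [pole_iff]
  have hX2 : (⟨2, 0, 0⟩ : CM) ∈ den pole expK (Fm.tens Fm.bot Fm.bot) :=
    sub_biorth ⟨_, hp, _, hp, rfl⟩
  have hXq : (⟨0, 0, 2⟩ : CM) ∈ den pole expK (Fm.tens Fm.bot Fm.bot) := by
    apply sub_biorth
    exact ⟨⟨0, 0, 2⟩, by simp [den, pole_iff], ⟨0, 0, 2⟩, by simp [den, pole_iff], rfl⟩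
  have hX1 : (1 : CM) ∉ den pole expK (Fm.tens Fm.bot Fm.bot) := by
    intro h1
    have := h1 _ X_minus
    simp [pole_iff] at this
  have hw : (⟨1, 1, 0⟩ : CM) ∈ orth pole (den pole expK (Fm.bang (Fm.tens Fm.bot Fm.bot))) := by
    rw [den, triorth]
    rintro y ⟨hy, rfl | rfl⟩
    · exact absurd hy hX1
    · simp [CM.mul_def, pole_iff]
  have hqb : (⟨0, 0, 2⟩ : CM) ∈ den pole expK (Fm.bang (Fm.tens Fm.bot Fm.bot)) :=
    sub_biorth ⟨hXq, by simp [expK]⟩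
  have hz : (⟨0, 0, 1⟩ : CM) ∈ orth pole (den pole expK
      (Fm.plus Fm.bot (Fm.parr (Fm.tens Fm.bot Fm.bot).dual
          (Fm.quest (Fm.tens Fm.bot Fm.bot).dual)))) := by
    apply sub_biorth
    refine ⟨z_unit, ?_⟩
    have e : (Fm.parr (Fm.tens Fm.bot Fm.bot).dual (Fm.quest (Fm.tens Fm.bot Fm.bot).dual))
      = (Fm.tens (Fm.tens Fm.bot Fm.bot) (Fm.bang (Fm.tens Fm.bot Fm.bot))).dual := rfl
    rw [e, den_dual, den_closed]
    rintro ⟨a, b, c⟩ hy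
    have := hy _ ⟨_, hX2, _, hqb, rfl⟩
    simp only [CM.mul_def, pole_iff] at *
    omega
  have := hs (by
    rw [ctx_cons, ctx_cons]
    exact ⟨_, hz, _, ⟨_, hw, 1, by simp [ctx], rfl⟩, rfl⟩)
  simp [CM.mul_def, CM.one_def, pole_iff] at this

/-- LL is not complete w.r.t. LLTN: with X = ⊥⊗⊥, the sequent
⊥ ⊕ (X⊥ ⅋ ?(X⊥)), !X has a bounded proof in LLTN but is not provable in LL. -/
theorem ll_incomplete_for_lltn :
    (BoundedLLTN
      [Fm.plus Fm.bot (Fm.parr (Fm.tens Fm.bot Fm.bot).dual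
          (Fm.quest (Fm.tens Fm.bot Fm.bot).dual)),
        Fm.bang (Fm.tens Fm.bot Fm.bot)]) ∧
    ¬ LL [Fm.plus Fm.bot (Fm.parr (Fm.tens Fm.bot Fm.bot).dual
          (Fm.quest (Fm.tens Fm.bot Fm.bot).dual)),
        Fm.bang (Fm.tens Fm.bot Fm.bot)] := by
  exact ⟨Or.inl lltn_side, ll_side⟩
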